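/- Let p be a positive rational number with √p irrational, let a, b be rational numbers, and set x = a + b√p. If x > 0 and a − b√p > 0, then every positive rational number q belongs to B(x). -/

import Mathlib

/-- `R` is an axis-parallel closed rectangle with side lengths `w` (horizontal)
and `h` (vertical), both positive. -/
def IsRect (R : Set (ℝ × ℝ)) (w h : ℝ) : Prop :=
  0 < w ∧ 0 < h ∧ ∃ x y : ℝ, R = Set.Icc x (x + w) ×ˢ Set.Icc y (y + h)

/-- The rectangle `R` is tiled by finitely many axis-parallel rectangles, each of
whose side ratios belongs to `ratios`: the tiles cover `R` and have pairwise
disjoint interiors. -/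
def TiledBy (R : Set (ℝ × ℝ)) (ratios : Set ℝ) : Prop :=
  ∃ (m : ℕ) (T : Fin m → Set (ℝ × ℝ)) (w h : Fin m → ℝ),
    (∀ i, IsRect (T i) (w i) (h i)) ∧
    (∀ i, w i / h i ∈ ratios ∨ h i / w i ∈ ratios) ∧
    (⋃ i, T i) = R ∧
    Pairwise fun i j => Disjoint (interior (T i)) (interior (T j))

/-- `BSet ratios` is the set of positive reals `z` such that some axis-parallel
rectangle with side ratio `z` can be tiled by finitely many axis-parallel
rectangles each of whose side ratio belongs to `ratios`. -/
def BSet (ratios : Set ℝ) : Set ℝ :=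
  {z | ∃ (W H : ℝ) (R : Set (ℝ × ℝ)),
    IsRect R W H ∧ (z = W / H ∨ z = H / W) ∧ TiledBy R ratios}

/-!
A positive real `z` lies in `BSet ratios` as soon as one rectangle of ratio `z` can be tiled, and
then every rectangle of ratio `z` can, by a dilation, a translation and possibly a reflection in
the diagonal. Placing rectangles of equal height side by side shows that `BSet ratios` is closed
under addition, and exchanging width and height shows that it is closed under inversion; hence it
is closed under multiplication by positive rationals. If `y` is the conjugate of `x`, with
`s = x + y` and `n = x * y` rational and positive, then `s = x + n * x⁻¹`, so `s`, and with it
every positive rational, is obtained from `x` by these operations.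
-/

section

variable {ratios : Set ℝ} {R S T : Set (ℝ × ℝ)} {w h c x y z : ℝ}

/-- `T` is an admissible tile: an axis-parallel rectangle whose width-to-height or height-to-width
ratio lies in `ratios`. -/
def IsTile (ratios : Set ℝ) (T : Set (ℝ × ℝ)) : Prop :=
  ∃ w h : ℝ, IsRect T w h ∧ (w / h ∈ ratios ∨ h / w ∈ ratios)

theorem tiledBy_iff_exists_finite : TiledBy R ratios ↔
    ∃ (ι : Type) (_ : Finite ι) (T : ι → Set (ℝ × ℝ)), (∀ i, IsTile ratios (T i)) ∧
      ⋃ i, T i = R ∧ Pairwise fun i j => Disjoint (interior (T i)) (interior (T j)) := by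
  constructor
  · rintro ⟨m, T, w, h, hrect, hratio, hcover, hdisj⟩
    exact ⟨Fin m, inferInstance, T, fun i => ⟨w i, h i, hrect i, hratio i⟩, hcover, hdisj⟩
  · rintro ⟨ι, _, T, htile, hcover, hdisj⟩
    obtain ⟨m, ⟨e⟩⟩ := Finite.exists_equiv_fin ι
    choose w h hrect hratio using htile
    exact ⟨m, T ∘ e.symm, w ∘ e.symm, h ∘ e.symm, fun i => hrect _, fun i => hratio _,
      (e.symm.surjective.iUnion_comp T).trans hcover,
      fun i j hij => hdisj (e.symm.injective.ne hij)⟩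

theorem IsTile.tiledBy (hT : IsTile ratios T) : TiledBy T ratios :=
  tiledBy_iff_exists_finite.2
    ⟨Unit, inferInstance, fun _ => T, fun _ => hT, Set.iUnion_const T, Subsingleton.pairwise⟩

theorem TiledBy.union (hR : TiledBy R ratios) (hS : TiledBy S ratios)
    (hRS : Disjoint (interior R) (interior S)) : TiledBy (R ∪ S) ratios := by
  obtain ⟨ι, _, T, hT, rfl, hTdisj⟩ := tiledBy_iff_exists_finite.1 hR
  obtain ⟨κ, _, U, hU, rfl, hUdisj⟩ := tiledBy_iff_exists_finite.1 hS
  have hTU (i : ι) (k : κ) : Disjoint (interior (T i)) (interior (U k)) :=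
    hRS.mono (interior_mono (Set.subset_iUnion T i)) (interior_mono (Set.subset_iUnion U k))
  refine tiledBy_iff_exists_finite.2
    ⟨ι ⊕ κ, inferInstance, Sum.elim T U, Sum.forall.2 ⟨hT, hU⟩, by simp [Set.iUnion_sum], ?_⟩
  rintro (i | k) (j | l) hne
  · exact hTdisj (ne_of_apply_ne Sum.inl hne)
  · exact hTU i l
  · exact (hTU j k).symm
  · exact hUdisj (ne_of_apply_ne Sum.inr hne)

theorem TiledBy.image (e : ℝ × ℝ ≃ₜ ℝ × ℝ)
    (he : ∀ T, IsTile ratios T → IsTile ratios (e '' T)) (hR : TiledBy R ratios) :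
    TiledBy (e '' R) ratios := by
  obtain ⟨ι, _, T, hT, rfl, hdisj⟩ := tiledBy_iff_exists_finite.1 hR
  refine tiledBy_iff_exists_finite.2
    ⟨ι, inferInstance, fun i => e '' T i, fun i => he _ (hT i), (Set.image_iUnion ..).symm, ?_⟩
  intro i j hij
  rw [← e.image_interior, ← e.image_interior]
  exact Set.disjoint_image_of_injective e.injective (hdisj hij)

theorem IsRect.image_swap (hR : IsRect R w h) : IsRect (Prod.swap '' R) h w := by
  obtain ⟨hw, hh, u, v, rfl⟩ := hR
  exact ⟨hh, hw, v, u, Set.image_swap_prod ..⟩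

theorem TiledBy.image_swap (hR : TiledBy R ratios) : TiledBy (Prod.swap '' R) ratios :=
  hR.image (Homeomorph.prodComm ℝ ℝ) fun _ ⟨w, h, hT, hratio⟩ => ⟨h, w, hT.image_swap, hratio.symm⟩

/-- The map `(s, t) ↦ (c * s + u, c * t + v)`, a dilation followed by a translation; it is used to
move a tiling from one rectangle to any other with the same side ratio. -/
noncomputable def dilateTranslate (c : ℝ) (hc : c ≠ 0) (u v : ℝ) : ℝ × ℝ ≃ₜ ℝ × ℝ :=
  (affineHomeomorph c u hc).prodCongr (affineHomeomorph c v hc)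

theorem dilateTranslate_image_prod_Icc (hc : 0 < c) (u v a b a' b' : ℝ) :
    dilateTranslate c hc.ne' u v '' (Set.Icc a b ×ˢ Set.Icc a' b') =
      Set.Icc (c * a + u) (c * b + u) ×ˢ Set.Icc (c * a' + v) (c * b' + v) := by
  rw [dilateTranslate, Homeomorph.coe_prodCongr, Set.prodMap_image_prod,
    affineHomeomorph_image_Icc _ _ _ _ hc, affineHomeomorph_image_Icc _ _ _ _ hc]

theorem IsRect.image_dilateTranslate (hc : 0 < c) (u v : ℝ) (hR : IsRect R w h) :
    IsRect (dilateTranslate c hc.ne' u v '' R) (c * w) (c * h) := by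
  obtain ⟨hw, hh, a, b, rfl⟩ := hR
  refine ⟨by positivity, by positivity, c * a + u, c * b + v, ?_⟩
  rw [dilateTranslate_image_prod_Icc hc]
  congr 2 <;> ring

theorem TiledBy.image_dilateTranslate (hc : 0 < c) (u v : ℝ) (hR : TiledBy R ratios) :
    TiledBy (dilateTranslate c hc.ne' u v '' R) ratios :=
  hR.image _ fun _ ⟨w, h, hT, hratio⟩ => ⟨c * w, c * h, hT.image_dilateTranslate hc u v, by
    rwa [mul_div_mul_left _ _ hc.ne', mul_div_mul_left _ _ hc.ne']⟩

theorem TiledBy.of_isRect_mul (hR : IsRect R w h) (htiled : TiledBy R ratios) (hc : 0 < c)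
    (hS : IsRect S (c * w) (c * h)) : TiledBy S ratios := by
  obtain ⟨_, _, a, b, rfl⟩ := hR
  obtain ⟨_, _, a', b', rfl⟩ := hS
  convert htiled.image_dilateTranslate hc (a' - c * a) (b' - c * b) using 1
  rw [dilateTranslate_image_prod_Icc hc]
  congr 2 <;> ring

theorem TiledBy.Icc_prod_of_Icc_prod {a b c : ℝ} {t : Set ℝ} (hab : a ≤ b) (hbc : b ≤ c)
    (hleft : TiledBy (Set.Icc a b ×ˢ t) ratios) (hright : TiledBy (Set.Icc b c ×ˢ t) ratios) :
    TiledBy (Set.Icc a c ×ˢ t) ratios := by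
  rw [← Set.Icc_union_Icc_eq_Icc hab hbc, Set.union_prod]
  refine hleft.union hright ?_
  rw [interior_prod_eq, interior_prod_eq, interior_Icc, interior_Icc, Set.disjoint_prod]
  exact .inl (Set.Ioo_disjoint_Ioo.2 ((min_le_left b c).trans (le_max_right a b)))

theorem pos_of_mem_BSet (hz : z ∈ BSet ratios) : 0 < z := by
  obtain ⟨w, h, R, ⟨hw, hh, -⟩, rfl | rfl, -⟩ := hz <;> positivity

theorem mem_BSet_iff_forall_isRect : z ∈ BSet ratios ↔
    0 < z ∧ ∀ R w h, IsRect R w h → w / h = z → TiledBy R ratios := by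
  constructor
  · intro hz
    obtain ⟨w, h, R, hR, hratio, htiled⟩ :
        ∃ w h R, IsRect R w h ∧ z = w / h ∧ TiledBy R ratios := by
      obtain ⟨w, h, R, hR, hratio | hratio, htiled⟩ := hz
      · exact ⟨w, h, R, hR, hratio, htiled⟩
      · exact ⟨h, w, _, hR.image_swap, hratio, htiled.image_swap⟩
    refine ⟨pos_of_mem_BSet hz, fun S w' h' hS hratio' => ?_⟩
    have hh : 0 < h := hR.2.1
    have hh' : 0 < h' := hS.2.1
    refine htiled.of_isRect_mul hR (div_pos hh' hh) ?_
    convert hS using 1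
    · rw [div_eq_iff hh'.ne'] at hratio'
      rw [hratio', hratio]
      ring
    · exact div_mul_cancel₀ h' hh.ne'
  · rintro ⟨hz, htiled⟩
    have hR : IsRect (Set.Icc 0 (0 + z) ×ˢ Set.Icc 0 (0 + 1)) z 1 := ⟨hz, one_pos, 0, 0, rfl⟩
    exact ⟨z, 1, _, hR, .inl (div_one z).symm, htiled _ _ _ hR (div_one z)⟩

theorem mem_BSet_of_mem (hz : 0 < z) (hmem : z ∈ ratios) : z ∈ BSet ratios :=
  mem_BSet_iff_forall_isRect.2
    ⟨hz, fun _ w h hR hratio => IsTile.tiledBy ⟨w, h, hR, .inl (hratio ▸ hmem)⟩⟩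

theorem inv_mem_BSet (hz : z ∈ BSet ratios) : z⁻¹ ∈ BSet ratios := by
  obtain ⟨w, h, R, hR, hratio, htiled⟩ := hz
  refine ⟨w, h, R, hR, ?_, htiled⟩
  rcases hratio with rfl | rfl
  · exact .inr (inv_div w h)
  · exact .inl (inv_div h w)

theorem add_mem_BSet (hx : x ∈ BSet ratios) (hy : y ∈ BSet ratios) : x + y ∈ BSet ratios := by
  obtain ⟨hxpos, hxtiled⟩ := mem_BSet_iff_forall_isRect.1 hx
  obtain ⟨hypos, hytiled⟩ := mem_BSet_iff_forall_isRect.1 hy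
  refine mem_BSet_iff_forall_isRect.2 ⟨add_pos hxpos hypos, ?_⟩
  rintro _ w h ⟨-, hh, u, v, rfl⟩ hratio
  obtain rfl : w = x * h + y * h := by rw [← add_mul, ← hratio, div_mul_cancel₀ w hh.ne']
  have hxh : 0 < x * h := mul_pos hxpos hh
  have hyh : 0 < y * h := mul_pos hypos hh
  rw [← add_assoc]
  exact .Icc_prod_of_Icc_prod (by linarith) (by linarith)
    (hxtiled _ _ _ ⟨hxh, hh, u, v, rfl⟩ (mul_div_cancel_right₀ x hh.ne'))
    (hytiled _ _ _ ⟨hyh, hh, u + x * h, v, rfl⟩ (mul_div_cancel_right₀ y hh.ne'))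

theorem natCast_mul_mem_BSet {n : ℕ} (hn : n ≠ 0) (hz : z ∈ BSet ratios) :
    n * z ∈ BSet ratios := by
  induction n, Nat.one_le_iff_ne_zero.2 hn using Nat.le_induction with
  | base => simpa using hz
  | succ n hn_pos ih =>
    rw [Nat.cast_succ, add_one_mul]
    exact add_mem_BSet (ih (Nat.one_le_iff_ne_zero.1 hn_pos)) hz

theorem div_natCast_mem_BSet {n : ℕ} (hn : n ≠ 0) (hz : z ∈ BSet ratios) :
    z / n ∈ BSet ratios := by
  have hmem := inv_mem_BSet (natCast_mul_mem_BSet hn (inv_mem_BSet hz))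
  rwa [mul_inv_rev, inv_inv] at hmem

theorem ratCast_mul_mem_BSet {r : ℚ} (hr : 0 < r) (hz : z ∈ BSet ratios) :
    r * z ∈ BSet ratios := by
  obtain ⟨m, hm⟩ := Int.eq_ofNat_of_zero_le (Rat.num_pos.2 hr).le
  have hm_ne : m ≠ 0 := by have := Rat.num_pos.2 hr; omega
  have hr_eq : (r : ℝ) * z = m * (z / r.den) := by
    rw [Rat.cast_def, hm, Int.cast_natCast]
    ring
  exact hr_eq ▸ natCast_mul_mem_BSet hm_ne (div_natCast_mem_BSet r.den_ne_zero hz)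

end

theorem add_mul_sqrt_add_sub_mul_sqrt (p a b : ℚ) :
    ((a : ℝ) + b * √p) + (a - b * √p) = (2 * a : ℚ) := by
  push_cast
  ring

theorem add_mul_sqrt_mul_sub_mul_sqrt {p : ℚ} (hp : 0 ≤ p) (a b : ℚ) :
    ((a : ℝ) + b * √p) * (a - b * √p) = (a ^ 2 - b ^ 2 * p : ℚ) := by
  have hsqrt : √(p : ℝ) ^ 2 = p := Real.sq_sqrt (by exact_mod_cast hp)
  push_cast
  linear_combination -(b : ℝ) ^ 2 * hsqrt

theorem stmt_7_general {ratios : Set ℝ} {x y : ℝ} {s n q : ℚ} (hx : x ∈ BSet ratios) (hy : 0 < y)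
    (hadd : x + y = s) (hmul : x * y = n) (hq : 0 < q) : (q : ℝ) ∈ BSet ratios := by
  have hxpos : 0 < x := pos_of_mem_BSet hx
  have hs : (0 : ℚ) < s := by exact_mod_cast hadd ▸ add_pos hxpos hy
  have hn : (0 : ℚ) < n := by exact_mod_cast hmul ▸ mul_pos hxpos hy
  have hy_eq : y = n * x⁻¹ := by rw [← hmul]; field_simp
  have hs_mem : (s : ℝ) ∈ BSet ratios := by
    rw [← hadd, hy_eq]
    exact add_mem_BSet hx (ratCast_mul_mem_BSet hn (inv_mem_BSet hx))
  have hq_eq : (q : ℝ) = (q / s : ℚ) * s := by rw [← Rat.cast_mul, div_mul_cancel₀ q hs.ne']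
  exact hq_eq ▸ ratCast_mul_mem_BSet (div_pos hq hs) hs_mem

/-- Lemma 4, second part: if `x = a + b√p > 0` and its conjugate `a - b√p > 0`,
then every positive rational belongs to `B(x)`. -/
theorem stmt_7 (p : ℚ) (hp : 0 < p) (hirr : Irrational (Real.sqrt p))
    (a b : ℚ) (x : ℝ) (hx : x = (a : ℝ) + (b : ℝ) * Real.sqrt p)
    (hxpos : 0 < x) (hconj : 0 < (a : ℝ) - (b : ℝ) * Real.sqrt p)
    (q : ℚ) (hq : 0 < q) :
    (q : ℝ) ∈ BSet {x} := by
  subst hx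
  exact stmt_7_general (mem_BSet_of_mem hxpos (Set.mem_singleton _)) hconj
    (add_mul_sqrt_add_sub_mul_sqrt p a b) (add_mul_sqrt_mul_sub_mul_sqrt hp.le a b) hq
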